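/- arXiv:2007.12666 — 4 statements merged into one kernel-verified Lean document; each statement's English description precedes it below -/
import Mathlib

section
/- Let n, p, q ∈ ℕ, and for each i let aᵢ < 0 < Aᵢ be real numbers, with componentwise barrier maps bᵢ(x) = log(Aᵢ(aᵢ−x)/(aᵢ(Aᵢ−x))), inverses bᵢ⁻¹(y) = aᵢAᵢ(e^y − 1)/(aᵢ·e^y − Aᵢ), and Bᵢ(y) = (aᵢ²·e^y − 2aᵢAᵢ + Aᵢ²·e^{−y})/(Aᵢ·aᵢ² − aᵢ·Aᵢ²). Let f : ℝⁿ → ℝ^{n×p}, g : ℝⁿ → ℝ^{n×q}, θ ∈ ℝᵖ, and ζ : ℝⁿ × ℝ → ℝ^q. Suppose s : [0,∞) → ℝⁿ is such that for every t ≥ 0 and every coordinate i, the i-th component sᵢ has derivative at t equal to Bᵢ(sᵢ(t)) · (f(b⁻¹(s(t)))·θ + g(b⁻¹(s(t)))·ζ(s(t), t))ᵢ, where b⁻¹(s) denotes componentwise application of bᵢ⁻¹. Then the function x(t) := b⁻¹(s(t)) satisfies, for every t ≥ 0 and every i: (a) aᵢ < xᵢ(t) < Aᵢ, and (b) xᵢ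 has derivative at t equal to (f(x(t))·θ + g(x(t))·ξ(x(t), t))ᵢ, where ξ(x, t) := ζ(b(x), t) and b(x) denotes componentwise application of bᵢ. -/
open Matrix

/-- The componentwise barrier function `b(x) = log(A(a−x)/(a(A−x)))`. -/
noncomputable def barrierFun (a A x : ℝ) : ℝ := Real.log (A * (a - x) / (a * (A - x)))

/-- The componentwise inverse barrier function `b⁻¹(y) = aA(e^y − 1)/(a·e^y − A)`. -/
noncomputable def barrierInv (a A y : ℝ) : ℝ :=
  a * A * (Real.exp y - 1) / (a * Real.exp y - A)

/-- The function `B(y) = (a²·e^y − 2aA + A²·e^{−y})/(A·a² − a·A²)`. -/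
noncomputable def barrierB (a A y : ℝ) : ℝ :=
  (a ^ 2 * Real.exp y - 2 * a * A + A ^ 2 * Real.exp (-y)) / (A * a ^ 2 - a * A ^ 2)

theorem barrier_den_neg {a A : ℝ} (ha : a < 0) (hA : 0 < A) (y : ℝ) :
    a * Real.exp y - A < 0 := by
  have := mul_neg_of_neg_of_pos ha (Real.exp_pos y)
  linarith

theorem barrierInv_sub {a A : ℝ} (ha : a < 0) (hA : 0 < A) (y : ℝ) :
    a - barrierInv a A y = a * Real.exp y * (a - A) / (a * Real.exp y - A) := by
  have h := (barrier_den_neg ha hA y).ne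
  unfold barrierInv
  rw [eq_div_iff h, sub_mul, div_mul_cancel₀ _ h]
  ring

theorem sub_barrierInv {a A : ℝ} (ha : a < 0) (hA : 0 < A) (y : ℝ) :
    A - barrierInv a A y = A * (a - A) / (a * Real.exp y - A) := by
  have h := (barrier_den_neg ha hA y).ne
  unfold barrierInv
  rw [eq_div_iff h, sub_mul, div_mul_cancel₀ _ h]
  ring

theorem barrierFun_barrierInv {a A : ℝ} (ha : a < 0) (hA : 0 < A) (y : ℝ) :
    barrierFun a A (barrierInv a A y) = y := by
  have h := (barrier_den_neg ha hA y).ne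
  have h2 : a - A ≠ 0 := by linarith
  unfold barrierFun
  rw [barrierInv_sub ha hA, sub_barrierInv ha hA]
  have : A * (a * Real.exp y * (a - A) / (a * Real.exp y - A)) /
      (a * (A * (a - A) / (a * Real.exp y - A))) = Real.exp y := by
    have hne : a * (A * (a - A) / (a * Real.exp y - A)) ≠ 0 :=
      mul_ne_zero ha.ne (div_ne_zero (mul_ne_zero hA.ne' h2) h)
    rw [div_eq_iff hne]
    ring
  rw [this, Real.log_exp]

theorem barrierInv_hasDerivAt {a A : ℝ} (ha : a < 0) (hA : 0 < A) (y : ℝ) :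
    HasDerivAt (barrierInv a A)
      (a * A * Real.exp y * (a - A) / (a * Real.exp y - A) ^ 2) y := by
  have h := (barrier_den_neg ha hA y).ne
  have h1 := ((Real.hasDerivAt_exp y).sub_const 1).const_mul (a * A)
  have h2 := ((Real.hasDerivAt_exp y).const_mul a).sub_const A
  have h3 := h1.div h2 h
  refine h3.congr_deriv ?_
  congr 1
  ring

theorem barrier_mul {a A : ℝ} (ha : a < 0) (hA : 0 < A) (y : ℝ) :
    a * A * Real.exp y * (a - A) / (a * Real.exp y - A) ^ 2 * barrierB a A y = 1 := by
  have h := (barrier_den_neg ha hA y).ne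
  have h2 : a - A ≠ 0 := by linarith
  have hE := (Real.exp_pos y).ne'
  have hB : barrierB a A y =
      (a * Real.exp y - A) ^ 2 / (a * A * Real.exp y * (a - A)) := by
    unfold barrierB
    have h3 : A * a ^ 2 - a * A ^ 2 = a * A * (a - A) := by ring
    have ha' := ha.ne
    have hA' := hA.ne'
    rw [h3, Real.exp_neg]
    field_simp
    ring
  have hn : a * A * Real.exp y * (a - A) ≠ 0 :=
    mul_ne_zero (mul_ne_zero (mul_ne_zero ha.ne hA.ne') hE) h2
  rw [hB, div_mul_div_comm, mul_comm, div_self (mul_ne_zero (pow_ne_zero 2 h) hn)]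

/-- a solution of the barrier-transformed system
`ṡᵢ = Bᵢ(sᵢ)(f(b⁻¹(s))θ + g(b⁻¹(s))ζ(s,t))ᵢ` is pushed forward by the inverse barrier
transformation to a solution `x = b⁻¹(s)` of the original system
`ẋ = f(x)θ + g(x)ξ(x,t)`, with `ξ(x,t) = ζ(b(x),t)`, that stays in the constraint box
`∏ᵢ (aᵢ, Aᵢ)` for all `t ≥ 0`. -/
theorem barrier_transform_pushforward {n p q : ℕ}
    (a A : Fin n → ℝ) (ha : ∀ i, a i < 0) (hA : ∀ i, 0 < A i)
    (f : (Fin n → ℝ) → Matrix (Fin n) (Fin p) ℝ)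
    (g : (Fin n → ℝ) → Matrix (Fin n) (Fin q) ℝ)
    (θ : Fin p → ℝ) (ζ : (Fin n → ℝ) → ℝ → Fin q → ℝ)
    (s : ℝ → Fin n → ℝ)
    (hs : ∀ t ≥ (0 : ℝ), ∀ i : Fin n,
      HasDerivAt (fun τ => s τ i)
        (barrierB (a i) (A i) (s t i) *
          ((f (fun j => barrierInv (a j) (A j) (s t j)) *ᵥ θ +
            g (fun j => barrierInv (a j) (A j) (s t j)) *ᵥ ζ (s t) t) i)) t) :
    ∀ t ≥ (0 : ℝ), ∀ i : Fin n,
      (a i < barrierInv (a i) (A i) (s t i) ∧ barrierInv (a i) (A i) (s t i) < A i) ∧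
      HasDerivAt (fun τ => barrierInv (a i) (A i) (s τ i))
        ((f (fun j => barrierInv (a j) (A j) (s t j)) *ᵥ θ +
          g (fun j => barrierInv (a j) (A j) (s t j)) *ᵥ
            ζ (fun j => barrierFun (a j) (A j) (barrierInv (a j) (A j) (s t j))) t) i) t := by
  intro t ht i
  have hb : (fun j => barrierFun (a j) (A j) (barrierInv (a j) (A j) (s t j))) = s t :=
    funext fun j => barrierFun_barrierInv (ha j) (hA j) _
  have hd := barrier_den_neg (ha i) (hA i) (s t i)
  have hlt : a i - A i < 0 := by linarith [ha i, hA i]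
  refine ⟨⟨?_, ?_⟩, ?_⟩
  · rw [← sub_neg, barrierInv_sub (ha i) (hA i)]
    exact div_neg_of_pos_of_neg (mul_pos_of_neg_of_neg
      (mul_neg_of_neg_of_pos (ha i) (Real.exp_pos _)) hlt) hd
  · rw [← sub_pos, sub_barrierInv (ha i) (hA i)]
    exact div_pos_of_neg_of_neg (mul_neg_of_pos_of_neg (hA i) hlt) hd
  · rw [hb]
    have := (barrierInv_hasDerivAt (ha i) (hA i) (s t i)).comp t (hs t ht i)
    rw [← mul_assoc, barrier_mul (ha i) (hA i), one_mul] at this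
    exact this
end

section
/- Let s₀ > 0 and let a = −1/2, A = 1/2, with b⁻¹(y) = aA(e^y − 1)/(a·e^y − A) and B(y) = (a²·e^y − 2aA + A²·e^{−y})/(A·a² − a·A²). There is no differentiable function s : [0,∞) → ℝ with s(0) = s₀ satisfying s'(t) = B(s(t))·(b⁻¹(s(t)) − b⁻¹(s(t))³) for all t ≥ 0; that is, every solution of the barrier-transformed closed-loop system starting from a positive initial condition escapes to infinity in finite time. -/
lemma aux_barrierInv (y : ℝ) :
    barrierInv (-(1/2)) (1/2) y = 1/2 - 1 / (Real.exp y + 1) := by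
  have h := Real.exp_pos y
  have h1 : Real.exp y + 1 ≠ 0 := by positivity
  have h2 : -(1/2) * Real.exp y - 1/2 ≠ 0 := by
    intro h3; linarith
  unfold barrierInv
  rw [div_eq_iff h2]
  field_simp
  ring

lemma aux_barrierB (y : ℝ) :
    barrierB (-(1/2)) (1/2) y * (Real.exp y / (Real.exp y + 1) ^ 2) = 1 := by
  have h := Real.exp_pos y
  have h1 : Real.exp y + 1 ≠ 0 := by positivity
  unfold barrierB
  rw [Real.exp_neg]
  field_simp
  ring

lemma aux_sq_lt (y : ℝ) : (barrierInv (-(1/2)) (1/2) y) ^ 2 < 1/4 := by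
  rw [aux_barrierInv]
  have h := Real.exp_pos y
  have h1 : 0 < 1 / (Real.exp y + 1) := by positivity
  have h2 : 1 / (Real.exp y + 1) < 1 := by
    rw [div_lt_one (by positivity)]; linarith
  nlinarith

lemma aux_deriv (y : ℝ) : HasDerivAt (barrierInv (-(1/2)) (1/2))
    (Real.exp y / (Real.exp y + 1) ^ 2) y := by
  have h1 : Real.exp y + 1 ≠ 0 := by positivity
  have e : barrierInv (-(1/2)) (1/2) = fun y => 1/2 - (Real.exp y + 1)⁻¹ := by
    funext z; rw [aux_barrierInv, one_div (Real.exp z + 1)]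
  rw [e]
  have := (((Real.hasDerivAt_exp y).add_const 1).fun_inv h1).const_sub (1/2)
  refine this.congr_deriv ?_
  ring

/-- With `a = −1/2`, `A = 1/2`, there is no differentiable function
`s : [0,∞) → ℝ` with `s(0) = s₀ > 0` satisfying
`s'(t) = B(s(t))·(b⁻¹(s(t)) − b⁻¹(s(t))³)` for all `t ≥ 0`: every solution of the
barrier-transformed closed-loop system starting from a positive initial condition
escapes to infinity in finite time. -/
theorem transformed_solution_escapes (s₀ : ℝ) (hs₀ : 0 < s₀) :
    ¬ ∃ s : ℝ → ℝ, s 0 = s₀ ∧ ∀ t ≥ (0 : ℝ),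
      HasDerivWithinAt s
        (barrierB (-(1/2)) (1/2) (s t) *
          (barrierInv (-(1/2)) (1/2) (s t) - (barrierInv (-(1/2)) (1/2) (s t)) ^ 3))
        (Set.Ici 0) t := by
  rintro ⟨s, h0, hs⟩
  set x : ℝ → ℝ := fun t => barrierInv (-(1/2)) (1/2) (s t) with hx
  have hlt : ∀ t, x t ^ 2 < 1/4 := fun t => aux_sq_lt (s t)
  have hd : ∀ t ≥ (0:ℝ), HasDerivWithinAt x (x t - x t ^ 3) (Set.Ici 0) t := by
    intro t ht
    have := (aux_deriv (s t)).comp_hasDerivWithinAt t (hs t ht)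
    refine HasDerivWithinAt.congr_deriv this ?_
    have hB := aux_barrierB (s t)
    linear_combination (x t - x t ^ 3) * hB
  have hy : ∀ t ≥ (0:ℝ), HasDerivWithinAt (fun t => x t ^ 2 * Real.exp (-t))
      (Real.exp (-t) * (x t ^ 2 * (1 - 2 * x t ^ 2))) (Set.Ici 0) t := by
    intro t ht
    have h1 := (hd t ht).fun_pow 2
    have h2 := ((hasDerivAt_neg t).exp).hasDerivWithinAt (s := Set.Ici 0)
    refine (h1.fun_mul h2).congr_deriv ?_
    push_cast
    ring
  have hmono : MonotoneOn (fun t => x t ^ 2 * Real.exp (-t)) (Set.Ici 0) := by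
    apply monotoneOn_of_hasDerivWithinAt_nonneg (convex_Ici 0)
      (fun t ht => (hy t ht).continuousWithinAt)
      (fun t ht => (hy t (interior_subset ht)).mono interior_subset)
    intro t _
    have := hlt t
    have h3 : 0 ≤ 1 - 2 * x t ^ 2 := by linarith
    positivity
  have hx0 : 0 < x 0 := by
    have h1 : 1 < Real.exp s₀ := Real.one_lt_exp_iff.mpr hs₀
    simp only [hx, h0, aux_barrierInv]
    rw [sub_pos]
    apply one_div_lt_one_div_of_lt <;> linarith
  have hT : (0:ℝ) ≤ 1 / x 0 ^ 2 := by positivity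
  have hm := hmono (Set.mem_Ici.mpr le_rfl) (Set.mem_Ici.mpr hT) hT
  simp only [neg_zero, Real.exp_zero, mul_one] at hm
  have hE := Real.add_one_le_exp (1 / x 0 ^ 2)
  have h4 := hlt (1 / x 0 ^ 2)
  rw [Real.exp_neg, ← div_eq_mul_inv, le_div_iff₀ (Real.exp_pos _)] at hm
  have h5 : x 0 ^ 2 * (1 / x 0 ^ 2 + 1) ≤ x 0 ^ 2 * Real.exp (1 / x 0 ^ 2) :=
    mul_le_mul_of_nonneg_left hE (by positivity)
  have h6 : x 0 ^ 2 * (1 / x 0 ^ 2 + 1) = 1 + x 0 ^ 2 := by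
    field_simp
  nlinarith [sq_nonneg (x 0)]
end

section
/- Let β be a real symmetric positive definite p×p matrix, let c > 0 and T ≥ 0, and let M : [0,∞) → Matrix (Fin p) (Fin p) ℝ be continuous with M(t) symmetric positive semidefinite for all t ≥ 0 and satisfying xᵀM(t)x ≥ c‖x‖² for all x ∈ ℝᵖ and all t ≥ T. If v : [0,∞) → ℝᵖ is differentiable with v'(t) = −β·M(t)·v(t) for all t ≥ 0, then there exist constants K > 0 and λ > 0 such that ‖v(t)‖ ≤ K·e^{−λ(t−T)}·‖v(T)‖ for all t ≥ T; in particular v(t) → 0 as t → ∞. -/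
open Matrix

lemma quad_bounds_aux {p : ℕ} (P : Matrix (Fin p) (Fin p) ℝ) (hP : P.PosDef) :
    ∃ a > (0 : ℝ), ∃ b > (0 : ℝ), ∀ x : Fin p → ℝ,
      a * (x ⬝ᵥ x) ≤ x ⬝ᵥ (P *ᵥ x) ∧ x ⬝ᵥ (P *ᵥ x) ≤ b * (x ⬝ᵥ x) := by
  have hcont : Continuous (fun x : Fin p → ℝ => x ⬝ᵥ (P *ᵥ x)) := by
    fun_prop
  have hcont1 : Continuous (fun x : Fin p → ℝ => x ⬝ᵥ x) := by
    fun_prop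
  have hcomp : IsCompact {x : Fin p → ℝ | x ⬝ᵥ x = 1} := by
    apply Metric.isCompact_of_isClosed_isBounded
    · exact isClosed_eq hcont1 continuous_const
    · apply (Metric.isBounded_closedBall (x := (0 : Fin p → ℝ)) (r := 1)).subset
      intro x hx
      rw [mem_closedBall_zero_iff, pi_norm_le_iff_of_nonneg zero_le_one]
      intro i
      have h1 : x i * x i ≤ x ⬝ᵥ x :=
        Finset.single_le_sum (f := fun i => x i * x i)
          (fun j _ => mul_self_nonneg (x j)) (Finset.mem_univ i)
      have h2 : x ⬝ᵥ x = 1 := hx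
      rw [Real.norm_eq_abs, abs_le]
      constructor <;> nlinarith
  have hpos : ∀ x : Fin p → ℝ, x ≠ 0 → 0 < x ⬝ᵥ (P *ᵥ x) := by
    intro x hx
    simpa using hP.dotProduct_mulVec_pos hx
  obtain ⟨a, ha, hla⟩ := hcomp.exists_forall_le' (a := (0 : ℝ)) hcont.continuousOn (by
    intro x hx
    apply hpos
    rintro rfl
    simp at hx)
  obtain ⟨b, hb⟩ := hcomp.bddAbove_image hcont.continuousOn
  refine ⟨a, ha, max b 1, by positivity, fun x => ?_⟩
  by_cases hx : x = 0
  · simp [hx]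
  have hs : 0 < x ⬝ᵥ x := by
    have h0 : 0 ≤ x ⬝ᵥ x := Finset.sum_nonneg (fun j _ => mul_self_nonneg (x j))
    exact lt_of_le_of_ne h0 (fun h => hx (dotProduct_self_eq_zero.mp h.symm))
  have hr : 0 < Real.sqrt (x ⬝ᵥ x) := Real.sqrt_pos.mpr hs
  have hrr := Real.mul_self_sqrt hs.le
  set r := Real.sqrt (x ⬝ᵥ x)
  have hy : (r⁻¹ • x) ⬝ᵥ (r⁻¹ • x) = 1 := by
    simp only [smul_dotProduct, dotProduct_smul, smul_eq_mul]
    rw [← hrr]; field_simp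
  have hq : (r⁻¹ • x) ⬝ᵥ (P *ᵥ (r⁻¹ • x)) = (x ⬝ᵥ (P *ᵥ x)) / (x ⬝ᵥ x) := by
    simp only [mulVec_smul, smul_dotProduct, dotProduct_smul, smul_eq_mul]
    rw [← hrr]; field_simp
  have h1 := hla _ hy
  have h2 := hb ⟨_, hy, rfl⟩
  simp only [hq] at h1 h2
  rw [le_div_iff₀ hs] at h1
  rw [div_le_iff₀ hs] at h2
  exact ⟨h1, h2.trans (mul_le_mul_of_nonneg_right (le_max_left _ _) hs.le)⟩

lemma hasDerivAt_quad_aux {p : ℕ} (P : Matrix (Fin p) (Fin p) ℝ) (hP : Pᵀ = P)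
    (v : ℝ → Fin p → ℝ) (w : Fin p → ℝ) (t : ℝ) (hv : HasDerivAt v w t) :
    HasDerivAt (fun s => v s ⬝ᵥ (P *ᵥ v s)) (2 * (v t ⬝ᵥ (P *ᵥ w))) t := by
  have hi := hasDerivAt_pi.mp hv
  have hPi : ∀ i, HasDerivAt (fun s => (P *ᵥ v s) i) ((P *ᵥ w) i) t := by
    intro i
    simp only [mulVec, dotProduct]
    exact HasDerivAt.fun_sum (fun j _ => (hi j).const_mul (P i j))
  have h : HasDerivAt (fun s => v s ⬝ᵥ (P *ᵥ v s)) (w ⬝ᵥ (P *ᵥ v t) + v t ⬝ᵥ (P *ᵥ w)) t := by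
    simp only [dotProduct, ← Finset.sum_add_distrib]
    exact HasDerivAt.fun_sum (fun j _ => (hi j).mul (hPi j))
  convert h using 1
  have : w ⬝ᵥ (P *ᵥ v t) = v t ⬝ᵥ (P *ᵥ w) := by
    rw [dotProduct_mulVec, ← mulVec_transpose, hP, dotProduct_comm]
  rw [this]; ring

/-- Let `β` be real symmetric positive definite, `c > 0`, `T ≥ 0`, and
`M : [0,∞) → ℝ^{p×p}` continuous, symmetric positive semidefinite for `t ≥ 0`, with
`xᵀM(t)x ≥ c‖x‖²` for all `x` and `t ≥ T`. If `v' = −β·M(t)·v` for `t ≥ 0`, then there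
are `K > 0` and `λ > 0` with `‖v(t)‖ ≤ K·e^{−λ(t−T)}·‖v(T)‖` for all `t ≥ T`; in
particular `v(t) → 0`. (Here `‖x‖ = √(xᵀx)` is the Euclidean norm.) -/
theorem parameter_error_exponential_decay {p : ℕ}
    (β : Matrix (Fin p) (Fin p) ℝ) (hβ : β.PosDef)
    (c T : ℝ) (hc : 0 < c) (hT : 0 ≤ T)
    (M : ℝ → Matrix (Fin p) (Fin p) ℝ) (hMcont : Continuous M)
    (hMpsd : ∀ t ≥ (0 : ℝ), (M t).PosSemidef)
    (hMpd : ∀ t ≥ T, ∀ x : Fin p → ℝ, c * (x ⬝ᵥ x) ≤ x ⬝ᵥ (M t *ᵥ x))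
    (v : ℝ → Fin p → ℝ)
    (hv : ∀ t ≥ (0 : ℝ), HasDerivAt v (-(β *ᵥ (M t *ᵥ v t))) t) :
    (∃ K > (0 : ℝ), ∃ lam > (0 : ℝ), ∀ t ≥ T,
      Real.sqrt (v t ⬝ᵥ v t) ≤ K * Real.exp (-lam * (t - T)) * Real.sqrt (v T ⬝ᵥ v T)) ∧
      Filter.Tendsto v Filter.atTop (nhds 0) := by
  obtain ⟨a, ha, b, hb, hab⟩ := quad_bounds_aux β⁻¹ hβ.inv
  have hsymm : (β⁻¹)ᵀ = β⁻¹ := by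
    simpa [IsHermitian, conjTranspose_eq_transpose_of_trivial] using hβ.inv.isHermitian
  have hdet : IsUnit β.det := hβ.det_pos.ne'.isUnit
  have hV : ∀ t ≥ (0 : ℝ), HasDerivAt (fun s => v s ⬝ᵥ (β⁻¹ *ᵥ v s))
      (-2 * (v t ⬝ᵥ (M t *ᵥ v t))) t := by
    intro t ht
    convert hasDerivAt_quad_aux β⁻¹ hsymm v _ t (hv t ht) using 1
    rw [mulVec_neg, mulVec_mulVec, nonsing_inv_mul _ hdet, one_mulVec, dotProduct_neg]
    ring
  set V : ℝ → ℝ := fun s => v s ⬝ᵥ (β⁻¹ *ᵥ v s) with hVdef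
  have hW : ∀ t ≥ (0 : ℝ), HasDerivAt (fun s => V s * Real.exp ((2 * c / b) * (s - T)))
      (-2 * (v t ⬝ᵥ (M t *ᵥ v t)) * Real.exp ((2 * c / b) * (t - T)) +
        V t * (Real.exp ((2 * c / b) * (t - T)) * (2 * c / b * 1))) t := by
    intro t ht
    exact (hV t ht).mul ((((hasDerivAt_id t).sub_const T).const_mul (2 * c / b)).exp)
  have hanti : AntitoneOn (fun s => V s * Real.exp ((2 * c / b) * (s - T))) (Set.Ici T) := by
    apply antitoneOn_of_deriv_nonpos (convex_Ici T)
    · intro t ht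
      exact (hW t (hT.trans ht)).continuousAt.continuousWithinAt
    · intro t ht
      rw [interior_Ici] at ht
      exact (hW t (hT.trans (le_of_lt ht))).differentiableAt.differentiableWithinAt
    · intro t ht
      rw [interior_Ici] at ht
      have htT : T ≤ t := le_of_lt ht
      rw [(hW t (hT.trans htT)).deriv]
      have h1 := hMpd t htT (v t)
      have h2 : V t ≤ b * (v t ⬝ᵥ v t) := (hab (v t)).2
      have h3 : V t * (2 * c / b) ≤ 2 * c * (v t ⬝ᵥ v t) := by
        calc V t * (2 * c / b) ≤ b * (v t ⬝ᵥ v t) * (2 * c / b) :=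
              mul_le_mul_of_nonneg_right h2 (by positivity)
          _ = 2 * c * (v t ⬝ᵥ v t) := by field_simp
      have he := Real.exp_pos ((2 * c / b) * (t - T))
      have h4 : -2 * (v t ⬝ᵥ (M t *ᵥ v t)) + V t * (2 * c / b) ≤ 0 := by linarith
      have h5 := mul_nonpos_of_nonpos_of_nonneg h4 he.le
      linarith
  have hmain : ∀ t ≥ T, Real.sqrt (v t ⬝ᵥ v t) ≤
      Real.sqrt (b / a) * Real.exp (-(c / b) * (t - T)) * Real.sqrt (v T ⬝ᵥ v T) := by
    intro t ht
    have h1 : V t * Real.exp ((2 * c / b) * (t - T)) ≤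
        V T * Real.exp ((2 * c / b) * (T - T)) := hanti Set.self_mem_Ici ht ht
    rw [sub_self, mul_zero, Real.exp_zero, mul_one] at h1
    have h2 : V T ≤ b * (v T ⬝ᵥ v T) := (hab (v T)).2
    have h3 : a * (v t ⬝ᵥ v t) ≤ V t := (hab (v t)).1
    have h0 : 0 ≤ v T ⬝ᵥ v T := Finset.sum_nonneg (fun j _ => mul_self_nonneg (v T j))
    apply Real.sqrt_le_iff.mpr
    refine ⟨by positivity, ?_⟩
    rw [mul_pow, mul_pow, Real.sq_sqrt (by positivity), Real.sq_sqrt h0, ← Real.exp_nat_mul]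
    have he : Real.exp (((2 : ℕ) : ℝ) * (-(c / b) * (t - T))) =
        (Real.exp ((2 * c / b) * (t - T)))⁻¹ := by
      rw [← Real.exp_neg]; congr 1; push_cast; ring
    rw [he]
    have hep := Real.exp_pos ((2 * c / b) * (t - T))
    set E := Real.exp ((2 * c / b) * (t - T))
    have h4 : a * (v t ⬝ᵥ v t) * E ≤ b * (v T ⬝ᵥ v T) :=
      (mul_le_mul_of_nonneg_right h3 hep.le).trans (h1.trans h2)
    have h5 : b / a * E⁻¹ * (v T ⬝ᵥ v T) = (b * (v T ⬝ᵥ v T)) / (a * E) := by field_simp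
    rw [h5, le_div_iff₀ (by positivity)]
    linarith
  refine ⟨⟨Real.sqrt (b / a), by positivity, c / b, by positivity, hmain⟩, ?_⟩
  have hlim : Filter.Tendsto (fun t => Real.sqrt (b / a) * Real.exp (-(c / b) * (t - T)) *
      Real.sqrt (v T ⬝ᵥ v T)) Filter.atTop (nhds 0) := by
    have h1 : Filter.Tendsto (fun t => -(c / b) * (t - T)) Filter.atTop Filter.atBot :=
      (Filter.tendsto_atTop_add_const_right _ (-T) Filter.tendsto_id).const_mul_atTop_of_neg
        (by have : 0 < c / b := by positivity
            linarith)
    have h2 := ((Real.tendsto_exp_atBot.comp h1).const_mul (Real.sqrt (b / a))).mul_const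
      (Real.sqrt (v T ⬝ᵥ v T))
    simpa using h2
  rw [tendsto_pi_nhds]
  intro i
  apply squeeze_zero_norm' _ hlim
  filter_upwards [Filter.eventually_ge_atTop T] with t ht
  refine le_trans ?_ (hmain t ht)
  rw [Real.norm_eq_abs]
  apply Real.abs_le_sqrt
  rw [sq]
  exact Finset.single_le_sum (f := fun i => v t i * v t i)
    (fun j _ => mul_self_nonneg (v t j)) (Finset.mem_univ i)
end

section
/- Fix dimensions n, p, q, L ∈ ℕ. Let s ∈ ℝⁿ, Q ∈ ℝ^{n×n}, R ∈ ℝ^{q×q} with R symmetric and invertible, y ∈ ℝ^{n×p}, G ∈ ℝ^{n×q}, θ, θ̂ ∈ ℝᵖ, W, Ŵ_c, Ŵ_a ∈ ℝ^L, σ' ∈ ℝ^{L×n} (the Jacobian of the value-function basis at s), and ε' ∈ ℝ^{1×n} (the gradient of the reconstruction error at s). Define F := y·θ, u* := −(1/2)R⁻¹Gᵀ(σ'ᵀW + ε'ᵀ), û := −(1/2)R⁻¹Gᵀσ'ᵀŴ_a, the Bellman error δ̂ := Ŵ_cᵀσ'(y·θ̂ + G·û) + ûᵀRû + sᵀQs,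 the estimation errors W̃_c := W − Ŵ_c, W̃_a := W − Ŵ_a, θ̃ := θ − θ̂, and the quantities ω := σ'(y·θ̂ + G·û), G_R := GR⁻¹Gᵀ, G_σ := σ'GR⁻¹Gᵀσ'ᵀ, G_ε := ε'G_Rε'ᵀ, Δ := (1/2)Wᵀσ'G_Rε'ᵀ + (1/4)G_ε − ε'F. If the Hamilton–Jacobi–Bellman relation (Wᵀσ' + ε')(y·θ + G·u*) + sᵀQs + u*ᵀRu* = 0 holds, then δ̂ = −ωᵀW̃_c + (1/4)W̃_aᵀG_σW̃_a − Wᵀσ'·y·θ̃ + Δ. -/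
open Matrix

/-- the analytical Bellman error decomposition. With
`u* = −(1/2)R⁻¹Gᵀ(σ'ᵀW + ε'ᵀ)`, `û = −(1/2)R⁻¹Gᵀσ'ᵀŴ_a`,
`δ̂ = Ŵ_cᵀσ'(yθ̂ + Gû) + ûᵀRû + sᵀQs`, `ω = σ'(yθ̂ + Gû)`, `G_R = GR⁻¹Gᵀ`,
`G_σ = σ'GR⁻¹Gᵀσ'ᵀ`, `G_ε = ε'G_Rε'ᵀ`, `Δ = (1/2)Wᵀσ'G_Rε'ᵀ + (1/4)G_ε − ε'F`,
`F = yθ`: if the HJB relation `(Wᵀσ' + ε')(yθ + Gu*) + sᵀQs + u*ᵀRu* = 0` holds, then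
`δ̂ = −ωᵀW̃_c + (1/4)W̃_aᵀG_σW̃_a − Wᵀσ'yθ̃ + Δ`. -/
theorem bellman_error_decomposition {n p q L : ℕ}
    (s : Fin n → ℝ) (Q : Matrix (Fin n) (Fin n) ℝ)
    (R : Matrix (Fin q) (Fin q) ℝ) (hRsymm : R.IsSymm) (hRinv : IsUnit R.det)
    (y : Matrix (Fin n) (Fin p) ℝ) (G : Matrix (Fin n) (Fin q) ℝ)
    (θ θhat : Fin p → ℝ) (W Wc Wa : Fin L → ℝ)
    (σ' : Matrix (Fin L) (Fin n) ℝ) (ε' : Fin n → ℝ) :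
    let F : Fin n → ℝ := y *ᵥ θ
    let ustar : Fin q → ℝ := -(1/2 : ℝ) • (R⁻¹ *ᵥ (Gᵀ *ᵥ (σ'ᵀ *ᵥ W + ε')))
    let uhat : Fin q → ℝ := -(1/2 : ℝ) • (R⁻¹ *ᵥ (Gᵀ *ᵥ (σ'ᵀ *ᵥ Wa)))
    let δhat : ℝ := Wc ⬝ᵥ (σ' *ᵥ (y *ᵥ θhat + G *ᵥ uhat)) + uhat ⬝ᵥ (R *ᵥ uhat) +
      s ⬝ᵥ (Q *ᵥ s)
    let Wctil : Fin L → ℝ := W - Wc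
    let Watil : Fin L → ℝ := W - Wa
    let θtil : Fin p → ℝ := θ - θhat
    let ω : Fin L → ℝ := σ' *ᵥ (y *ᵥ θhat + G *ᵥ uhat)
    let GR : Matrix (Fin n) (Fin n) ℝ := G * R⁻¹ * Gᵀ
    let Gσ : Matrix (Fin L) (Fin L) ℝ := σ' * G * R⁻¹ * Gᵀ * σ'ᵀ
    let Gε : ℝ := ε' ⬝ᵥ (GR *ᵥ ε')
    let Δ : ℝ := (1/2 : ℝ) * (W ⬝ᵥ (σ' *ᵥ (GR *ᵥ ε'))) + (1/4 : ℝ) * Gε - ε' ⬝ᵥ F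
    W ⬝ᵥ (σ' *ᵥ (y *ᵥ θ + G *ᵥ ustar)) + ε' ⬝ᵥ (y *ᵥ θ + G *ᵥ ustar) +
        s ⬝ᵥ (Q *ᵥ s) + ustar ⬝ᵥ (R *ᵥ ustar) = 0 →
      δhat = -(ω ⬝ᵥ Wctil) + (1/4 : ℝ) * (Watil ⬝ᵥ (Gσ *ᵥ Watil)) -
        W ⬝ᵥ (σ' *ᵥ (y *ᵥ θtil)) + Δ := by
  intro F ustar uhat δhat Wctil Watil θtil ω GR Gσ Gε Δ h
  have hσ : ∀ (a : Fin L → ℝ) (v : Fin n → ℝ), a ⬝ᵥ (σ' *ᵥ v) = (σ'ᵀ *ᵥ a) ⬝ᵥ v := by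
    intro a v
    rw [dotProduct_mulVec, mulVec_transpose]
  have hG : ∀ (a : Fin n → ℝ) (v : Fin q → ℝ), a ⬝ᵥ (G *ᵥ v) = (Gᵀ *ᵥ a) ⬝ᵥ v := by
    intro a v
    rw [dotProduct_mulVec, mulVec_transpose]
  have hRi : ∀ a v : Fin q → ℝ, (R⁻¹ *ᵥ a) ⬝ᵥ v = a ⬝ᵥ (R⁻¹ *ᵥ v) := by
    intro a v
    rw [dotProduct_mulVec a, ← mulVec_transpose, transpose_nonsing_inv, hRsymm.eq]
  have hRR : ∀ v : Fin q → ℝ, R *ᵥ (R⁻¹ *ᵥ v) = v := by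
    intro v
    rw [mulVec_mulVec, mul_nonsing_inv _ hRinv, one_mulVec]
  have hc : ∀ a v : Fin q → ℝ, a ⬝ᵥ (R⁻¹ *ᵥ v) = v ⬝ᵥ (R⁻¹ *ᵥ a) := by
    intro a v
    rw [← hRi, dotProduct_comm]
  have hω : ω ⬝ᵥ Wctil = Wctil ⬝ᵥ ω := dotProduct_comm _ _
  rw [hω]
  simp only [F, ustar, uhat, δhat, Wctil, Watil, θtil, ω, GR, Gσ, Gε, Δ] at h ⊢
  simp only [← mulVec_mulVec, hσ, mulVec_add, mulVec_sub, mulVec_smul, dotProduct_add,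
    add_dotProduct, dotProduct_sub, sub_dotProduct, dotProduct_smul, smul_dotProduct,
    smul_eq_mul, hRR, hRi, hG, smul_add] at h ⊢
  have h1 := hc (Gᵀ *ᵥ (σ'ᵀ *ᵥ W)) (Gᵀ *ᵥ (σ'ᵀ *ᵥ Wa))
  have h2 := hc (Gᵀ *ᵥ (σ'ᵀ *ᵥ W)) (Gᵀ *ᵥ ε')
  linarith
end
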